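/- Converse part of Theorem 1 (covert multi-bit watermarking capacity with non-causal state). Let S, X be finite sets, P_S a pmf on S, and P_{X|S} a conditional pmf. For each n, consider a code consisting of: a message set M_n, a key set K_n, an arbitrary stochastic encoder producing X^n ∈ X^n from (S^n, M, K) where S^n ~ P_S^{⊗n}, M is uniform on M_n, and K is uniform on K_n and independent of (M, S^n), and a decoder g_n : X^n × K_n → M_n. Suppose the error probabilities δ_n = P(g_n(X^n, K) ≠ M) satisfy δ_n → 0 and the covertness deviations σ_n = max_m V(P̃^m_{X^n S^n}, (P_{X|S} P_S)^{⊗n}) satisfy σ_n → 0, where P̃^m_{X^n S^n} is the joint pmf of (X^n, S^n) conditioned on M = m. Then limsup_{n→∞} (1/n) log₂ |M_n| ≤ sup { I(U;X) − I(U;S) }, where the supremum is over all finite sets U and all conditional pmfs P_{U|S}, W_{X|U,S} satisfying Σ_u P_{U|S}(u|s) W_{X|U,S}(x|u,s) = P_{X|S}(x|s) for all x and all s with P_S(s) > 0, and the information quantities are computed under the joint pmf P_S · P_{U|S} · W_{X|U,S}. -/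

import Mathlib

open Finset Filter Real

noncomputable section

open scoped Classical

/-- Pushforward of a mass function along a map. -/
def pushf {α β : Type*} [Fintype α] (p : α → ℝ) (f : α → β) : β → ℝ :=
  fun b => ∑ a, if f a = b then p a else 0

/-- Shannon entropy (in bits) of a mass function on a finite type,
with the convention `0 * logb 2 0 = 0`. -/
def ent {α : Type*} [Fintype α] (p : α → ℝ) : ℝ := -∑ a, p a * Real.logb 2 (p a)

/-- Shannon entropy (in bits) of a random variable `f` under the mass function `p`. -/
def entRV {α β : Type*} [Fintype α] [Fintype β] (p : α → ℝ) (f : α → β) : ℝ :=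
  ent (pushf p f)

/-- Mutual information `I(f; g)` (in bits) under the mass function `p`. -/
def mi {α β γ : Type*} [Fintype α] [Fintype β] [Fintype γ]
    (p : α → ℝ) (f : α → β) (g : α → γ) : ℝ :=
  entRV p f + entRV p g - entRV p (fun a => (f a, g a))

/-- Conditional mutual information `I(f; g | h)` (in bits) under the mass function `p`. -/
def cmi {α β γ δ : Type*} [Fintype α] [Fintype β] [Fintype γ] [Fintype δ]
    (p : α → ℝ) (f : α → β) (g : α → γ) (h : α → δ) : ℝ :=
  entRV p (fun a => (f a, h a)) + entRV p (fun a => (g a, h a))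
    - entRV p (fun a => (f a, g a, h a)) - entRV p h

/-- Conditional entropy `H(f | g)` (in bits) under the mass function `p`. -/
def condEnt {α β γ : Type*} [Fintype α] [Fintype β] [Fintype γ]
    (p : α → ℝ) (f : α → β) (g : α → γ) : ℝ :=
  entRV p (fun a => (f a, g a)) - entRV p g

/-- Total variation distance between two mass functions on a finite type. -/
def TV {α : Type*} [Fintype α] (p q : α → ℝ) : ℝ := (∑ a, |p a - q a|) / 2

/-- The binary entropy function (in bits), with `h2 0 = h2 1 = 0`. -/
def h2 (t : ℝ) : ℝ := -(t * Real.logb 2 t) - (1 - t) * Real.logb 2 (1 - t)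


namespace CWC

lemma entRV_eq_sum {α β : Type*} [Fintype α] [Fintype β] (p : α → ℝ) (f : α → β) :
    entRV p f = -∑ a, p a * Real.logb 2 (pushf p f (f a)) := by
  unfold entRV ent
  congr 1
  have h : ∀ b, pushf p f b * Real.logb 2 (pushf p f b)
      = ∑ a, if f a = b then p a * Real.logb 2 (pushf p f (f a)) else 0 := by
    intro b
    conv_lhs => rw [show pushf p f b * Real.logb 2 (pushf p f b)
      = (∑ a, if f a = b then p a else 0) * Real.logb 2 (pushf p f b) from rfl]
    rw [Finset.sum_mul]
    refine Finset.sum_congr rfl fun a _ => ?_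
    split_ifs with hb
    · rw [hb]
    · simp
  rw [Finset.sum_congr rfl fun b _ => h b, Finset.sum_comm]
  refine Finset.sum_congr rfl fun a _ => ?_
  simp

lemma entRV_congr {α β γ : Type*} [Fintype α] [Fintype β] [Fintype γ] (p : α → ℝ)
    (f : α → β) (g : α → γ) (h : ∀ a b, f a = f b ↔ g a = g b) : entRV p f = entRV p g := by
  rw [entRV_eq_sum, entRV_eq_sum]
  congr 1
  refine Finset.sum_congr rfl fun a _ => ?_
  congr 2
  unfold pushf
  refine Finset.sum_congr rfl fun b _ => ?_
  simp only [h b a]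

lemma pushf_pushf {α β γ : Type*} [Fintype α] [Fintype β] (p : α → ℝ)
    (f : α → β) (g : β → γ) : pushf (pushf p f) g = pushf p (fun a => g (f a)) := by
  funext c
  unfold pushf
  have h : ∀ b, (if g b = c then ∑ a, (if f a = b then p a else 0) else 0)
      = ∑ a, if f a = b then (if g (f a) = c then p a else 0) else 0 := by
    intro b
    by_cases hb : g b = c
    · rw [if_pos hb]
      refine Finset.sum_congr rfl fun a _ => ?_
      by_cases hab : f a = b
      · subst hab; simp [hb]
      · simp [hab]
    · rw [if_neg hb]
      symm
      apply Finset.sum_eq_zero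
      intro a _
      by_cases hab : f a = b
      · subst hab; simp [hb]
      · simp [hab]
  rw [Finset.sum_congr rfl fun b _ => h b, Finset.sum_comm]
  refine Finset.sum_congr rfl fun a _ => ?_
  simp

lemma entRV_pushf {α β γ : Type*} [Fintype α] [Fintype β] [Fintype γ] (p : α → ℝ)
    (f : α → β) (g : β → γ) : entRV (pushf p f) g = entRV p (fun a => g (f a)) := by
  unfold entRV; rw [pushf_pushf]

lemma pushf_nonneg {α β : Type*} [Fintype α] (p : α → ℝ) (hp : ∀ a, 0 ≤ p a)
    (f : α → β) (b : β) : 0 ≤ pushf p f b := by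
  unfold pushf
  refine Finset.sum_nonneg fun a _ => ?_
  split_ifs
  · exact hp a
  · exact le_rfl

lemma pushf_sum {α β : Type*} [Fintype α] [Fintype β] (p : α → ℝ) (f : α → β) :
    ∑ b, pushf p f b = ∑ a, p a := by
  unfold pushf
  rw [Finset.sum_comm]
  refine Finset.sum_congr rfl fun a _ => ?_
  simp

lemma le_pushf {α β : Type*} [Fintype α] (p : α → ℝ) (hp : ∀ a, 0 ≤ p a)
    (f : α → β) (a : α) : p a ≤ pushf p f (f a) := by
  unfold pushf
  have := Finset.single_le_sum (f := fun a' => if f a' = f a then p a' else 0)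
    (fun a' _ => by split_ifs; exacts [hp a', le_rfl]) (Finset.mem_univ a)
  simpa using this

lemma sum_pushf_mul {α β : Type*} [Fintype α] [Fintype β] (p : α → ℝ) (f : α → β) (φ : β → ℝ) :
    ∑ b, pushf p f b * φ b = ∑ a, p a * φ (f a) := by
  unfold pushf
  simp_rw [Finset.sum_mul]
  rw [Finset.sum_comm]
  refine Finset.sum_congr rfl fun a _ => ?_
  simp

/-- Gibbs' inequality. -/
lemma gibbs {α : Type*} [Fintype α] (p q : α → ℝ) (hp : ∀ a, 0 ≤ p a) (hq : ∀ a, 0 ≤ q a)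
    (hpq : ∀ a, p a ≠ 0 → q a ≠ 0) (hs : ∑ a, q a ≤ ∑ a, p a) :
    ent p ≤ -∑ a, p a * Real.logb 2 (q a) := by
  unfold ent
  rw [neg_le_neg_iff, ← sub_nonpos, ← Finset.sum_sub_distrib]
  have hl : 0 < Real.log 2 := Real.log_pos (by norm_num)
  have h : ∀ a, p a * Real.logb 2 (q a) - p a * Real.logb 2 (p a) ≤ (q a - p a) / Real.log 2 := by
    intro a
    by_cases h0 : p a = 0
    · rw [h0]; simp; exact div_nonneg (hq a) hl.le
    have hpa : 0 < p a := lt_of_le_of_ne (hp a) (Ne.symm h0)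
    have hqa : 0 < q a := lt_of_le_of_ne (hq a) (Ne.symm (hpq a h0))
    have h1 := Real.log_le_sub_one_of_pos (div_pos hqa hpa)
    rw [Real.log_div hqa.ne' hpa.ne'] at h1
    have h2 : p a * (Real.log (q a) - Real.log (p a)) ≤ q a - p a := by
      calc _ ≤ p a * (q a / p a - 1) := mul_le_mul_of_nonneg_left h1 hpa.le
        _ = q a - p a := by field_simp
    unfold Real.logb
    rw [← mul_sub, ← sub_div, ← mul_div_assoc]
    gcongr
  calc _ ≤ ∑ a, (q a - p a) / Real.log 2 := Finset.sum_le_sum fun a _ => h a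
    _ = (∑ a, q a - ∑ a, p a) / Real.log 2 := by rw [← Finset.sum_div, Finset.sum_sub_distrib]
    _ ≤ 0 := div_nonpos_of_nonpos_of_nonneg (by linarith) hl.le

lemma gibbsRV {α β : Type*} [Fintype α] [Fintype β] (p : α → ℝ) (f : α → β) (q : β → ℝ)
    (hp : ∀ a, 0 ≤ p a) (hq : ∀ b, 0 ≤ q b)
    (hpq : ∀ a, p a ≠ 0 → q (f a) ≠ 0) (hs : ∑ b, q b ≤ ∑ a, p a) :
    entRV p f ≤ -∑ a, p a * Real.logb 2 (q (f a)) := by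
  unfold entRV
  refine (gibbs (pushf p f) q (pushf_nonneg p hp f) hq ?_ (by rwa [pushf_sum])).trans ?_
  · intro b hb
    unfold pushf at hb
    obtain ⟨a, -, ha⟩ := Finset.exists_ne_zero_of_sum_ne_zero hb
    split_ifs at ha with h
    · rw [← h]; exact hpq a ha
    · exact absurd rfl ha
  · rw [sum_pushf_mul p f (fun b => Real.logb 2 (q b))]

/-- monotonicity of entropy -/
lemma entRV_mono {α β γ : Type*} [Fintype α] [Fintype β] [Fintype γ] (p : α → ℝ)
    (hp : ∀ a, 0 ≤ p a)
    (f : α → β) (g : α → γ) (h : ∀ a b, g a = g b → f a = f b) : entRV p f ≤ entRV p g := by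
  rw [entRV_eq_sum, entRV_eq_sum, neg_le_neg_iff]
  refine Finset.sum_le_sum fun a _ => ?_
  by_cases h0 : p a = 0
  · simp [h0]
  have hpa : 0 < p a := lt_of_le_of_ne (hp a) (Ne.symm h0)
  refine mul_le_mul_of_nonneg_left ?_ hpa.le
  refine Real.logb_le_logb_of_le (by norm_num) (hpa.trans_le (le_pushf p hp g a)) ?_
  unfold pushf
  refine Finset.sum_le_sum fun b _ => ?_
  by_cases hg : g b = g a
  · rw [if_pos hg, if_pos (h _ _ hg)]
  · rw [if_neg hg]; split_ifs
    · exact hp b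
    · exact le_rfl

lemma entRV_nonneg {α β : Type*} [Fintype α] [Fintype β] (p : α → ℝ)
    (hp : ∀ a, 0 ≤ p a) (hs : ∑ a, p a = 1) (f : α → β) : 0 ≤ entRV p f := by
  have h := entRV_mono p hp (fun _ => ()) f (fun _ _ _ => rfl)
  refine le_trans (le_of_eq ?_) h
  rw [entRV_eq_sum]
  have : pushf p (fun _ => ()) () = 1 := by simp [pushf, hs]
  simp [this]

/-- the coupling step -/
lemma coupling {ξ : Type*} [Fintype ξ] {K : ℕ} (hK : 0 < K) (enc : Fin K → ξ → ℝ) (q : ξ → ℝ)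
    (h0 : ∀ k x, 0 ≤ enc k x) (h1 : ∀ k, ∑ x, enc k x = 1) (hq0 : ∀ x, 0 ≤ q x)
    (hq1 : ∑ x, q x = 1) :
    ∃ enc' e : Fin K → ξ → ℝ, (∀ k x, 0 ≤ enc' k x) ∧ (∀ k, ∑ x, enc' k x = 1) ∧
      (∀ x, (1 / (K : ℝ)) * ∑ k, enc' k x = q x) ∧ (∀ k x, 0 ≤ e k x) ∧
      (∀ k x, enc' k x ≤ enc k x + e k x) ∧
      (1 / (K : ℝ)) * ∑ k, ∑ x, e k x = (∑ x, |(1 / (K : ℝ)) * ∑ k, enc k x - q x|) / 2 := by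
  have hKr : (0 : ℝ) < K := by exact_mod_cast hK
  set p : ξ → ℝ := fun x => (1 / (K : ℝ)) * ∑ k, enc k x with hp
  have hp0 : ∀ x, 0 ≤ p x := fun x => mul_nonneg (by positivity) (Finset.sum_nonneg fun k _ => h0 k x)
  have hp1 : ∑ x, p x = 1 := by
    simp only [hp]
    rw [← Finset.mul_sum, Finset.sum_comm]
    simp [h1]; field_simp
  set ρ : ξ → ℝ := fun x => min 1 (q x / p x) with hρ
  have hρ0 : ∀ x, 0 ≤ ρ x := fun x => le_min zero_le_one (div_nonneg (hq0 x) (hp0 x))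
  have hρ1 : ∀ x, ρ x ≤ 1 := fun x => min_le_left _ _
  have hpρ : ∀ x, p x * ρ x = min (p x) (q x) := by
    intro x
    rcases (hp0 x).eq_or_lt with h | h
    · rw [← h]; simp [hq0 x]
    · simp only [hρ]
      rw [mul_min_of_nonneg _ _ h.le, mul_one, mul_div_cancel₀ _ h.ne']
  set d : Fin K → ℝ := fun k => 1 - ∑ x, enc k x * ρ x with hd
  have hd0 : ∀ k, 0 ≤ d k := by
    intro k
    simp only [hd]
    rw [← h1 k, ← Finset.sum_sub_distrib]
    refine Finset.sum_nonneg fun x _ => ?_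
    nlinarith [h0 k x, hρ1 x]
  set r : ξ → ℝ := fun x => max (q x - p x) 0 with hr
  have hr0 : ∀ x, 0 ≤ r x := fun x => le_max_right _ _
  have hminr : ∀ x, min (p x) (q x) + r x = q x := by
    intro x
    simp only [hr]
    rcases le_total (p x) (q x) with h | h
    · rw [min_eq_left h, max_eq_left (by linarith)]; ring
    · rw [min_eq_right h, max_eq_right (by linarith)]; ring
  set T : ℝ := ∑ x, r x with hT
  have hT0 : 0 ≤ T := Finset.sum_nonneg fun x _ => hr0 x
  have havgρ : ∀ x, (1 / (K : ℝ)) * ∑ k, enc k x * ρ x = min (p x) (q x) := by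
    intro x
    rw [← hpρ, ← Finset.sum_mul, ← mul_assoc]
  have hdT : (1 / (K : ℝ)) * ∑ k, d k = T := by
    simp only [hd, hT]
    rw [Finset.sum_sub_distrib, mul_sub, Finset.sum_comm (s := (Finset.univ : Finset (Fin K))),
      Finset.mul_sum (s := (Finset.univ : Finset ξ)), Finset.sum_congr rfl fun x _ => havgρ x]
    have : ∑ x, r x = ∑ x, q x - ∑ x, min (p x) (q x) := by
      rw [← Finset.sum_sub_distrib]
      refine Finset.sum_congr rfl fun x _ => ?_
      linarith [hminr x]
    rw [this, hq1]
    simp; field_simp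
  have hdz : T = 0 → ∀ k, d k = 0 := by
    intro h k
    rw [h] at hdT
    have h2 : ∑ k, d k = 0 := by
      rcases mul_eq_zero.mp hdT with h3 | h3
      · exact absurd h3 (by positivity)
      · exact h3
    exact (Finset.sum_eq_zero_iff_of_nonneg fun k _ => hd0 k).mp h2 k (Finset.mem_univ k)
  have hTe : ∀ k, ∑ x, d k * r x / T = d k := by
    intro k
    rw [← Finset.sum_div, ← Finset.mul_sum, ← hT]
    by_cases h : T = 0
    · rw [hdz h k]; simp
    · field_simp
  refine ⟨fun k x => enc k x * ρ x + d k * r x / T, fun k x => d k * r x / T, ?_, ?_, ?_, ?_, ?_, ?_⟩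
  · intro k x
    have := h0 k x; have := hρ0 x; have := hd0 k; have := hr0 x
    positivity
  · intro k
    rw [Finset.sum_add_distrib, hTe]
    simp only [hd]; ring
  · intro x
    rw [Finset.sum_add_distrib, mul_add, havgρ]
    refine Eq.trans ?_ (hminr x)
    congr 1
    rw [← Finset.sum_div, ← Finset.sum_mul, ← mul_div_assoc, ← mul_assoc, hdT]
    by_cases h : T = 0
    · have := (Finset.sum_eq_zero_iff_of_nonneg fun x _ => hr0 x).mp (hT.symm.trans h) x
        (Finset.mem_univ x)
      rw [this]; simp
    · field_simp
  · intro k x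
    have := hd0 k; have := hr0 x
    positivity
  · intro k x
    have : enc k x * ρ x ≤ enc k x := mul_le_of_le_one_right (h0 k x) (hρ1 x)
    linarith
  · rw [Finset.sum_congr rfl fun k _ => hTe k, hdT]
    have h2 : ∀ x, |p x - q x| = 2 * r x - (q x - p x) := by
      intro x
      simp only [hr]
      rcases le_total (p x) (q x) with h | h
      · rw [abs_of_nonpos (by linarith), max_eq_left (by linarith)]; ring
      · rw [abs_of_nonneg (by linarith), max_eq_right (by linarith)]; ring
    rw [Finset.sum_congr rfl fun x _ => h2 x, Finset.sum_sub_distrib, Finset.sum_sub_distrib,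
      hq1, hp1, ← Finset.mul_sum]
    simp [hT]

lemma sum_prod_pi {α : Type*} [Fintype α] {n : ℕ} (F : Fin n → α → ℝ) :
    ∑ v : Fin n → α, ∏ t, F t (v t) = ∏ t, ∑ a, F t a := by
  rw [Finset.prod_univ_sum, Fintype.piFinset_univ]

lemma pushf_iid_coord {α : Type*} [Fintype α] {n : ℕ} (Q : α → ℝ) (hQ : ∑ a, Q a = 1)
    (i : Fin n) (c : α) :
    pushf (fun v : Fin n → α => ∏ t, Q (v t)) (fun v => v i) c = Q c := by
  unfold pushf
  have h : ∀ v : Fin n → α, (if v i = c then ∏ t, Q (v t) else 0)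
      = ∏ t, (fun t a => if t = i then (if a = c then Q a else 0) else Q a) t (v t) := by
    intro v
    dsimp only
    split_ifs with hv
    · refine Finset.prod_congr rfl fun t _ => ?_
      split_ifs with h1 h2
      · rfl
      · subst h1; exact absurd hv h2
      · rfl
    · symm
      apply Finset.prod_eq_zero (Finset.mem_univ i)
      simp [hv]
  rw [Finset.sum_congr rfl fun v _ => h v]
  refine (sum_prod_pi (fun t a => if t = i then (if a = c then Q a else 0) else Q a)).trans ?_
  rw [Finset.prod_eq_single i]
  · simp
  · intro t _ ht
    simp [ht, hQ]
  · simp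

lemma pushf_iid_map {α β : Type*} [Fintype α] {n : ℕ} (Q : α → ℝ) (f : α → β) (x : Fin n → β) :
    pushf (fun v : Fin n → α => ∏ t, Q (v t)) (fun v t => f (v t)) x = ∏ t, pushf Q f (x t) := by
  unfold pushf
  rw [← sum_prod_pi]
  refine Finset.sum_congr rfl fun v _ => ?_
  split_ifs with hv
  · refine Finset.prod_congr rfl fun t _ => ?_
    rw [if_pos (congrFun hv t)]
  · have : ∃ t, f (v t) ≠ x t := by
      by_contra hc; push Not at hc; exact hv (funext hc)
    obtain ⟨t, ht⟩ := this
    symm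
    apply Finset.prod_eq_zero (Finset.mem_univ t)
    rw [if_neg ht]

/-- entropy of a variable with product law -/
lemma sum_logb_prod {α β : Type*} [Fintype α] [Fintype β] {n : ℕ} (p : α → ℝ) (R : β → ℝ)
    (hp : ∀ a, 0 ≤ p a)
    (x : α → Fin n → β) (hx : ∀ t b, pushf p (fun a => x a t) b = R b) :
    -∑ a, p a * Real.logb 2 (∏ t, R (x a t)) = ∑ t, entRV p (fun a => x a t) := by
  have h : ∀ t, entRV p (fun a => x a t) = -∑ a, p a * Real.logb 2 (R (x a t)) := by
    intro t
    rw [entRV_eq_sum]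
    simp_rw [hx]
  rw [Finset.sum_congr rfl fun t _ => h t, Finset.sum_neg_distrib, Finset.sum_comm]
  congr 1
  refine Finset.sum_congr rfl fun a _ => ?_
  by_cases h0 : p a = 0
  · simp [h0]
  rw [← Finset.mul_sum, Real.logb_prod]
  intro t _
  have h1 := le_pushf p hp (fun a => x a t) a
  rw [hx] at h1
  have := lt_of_le_of_ne (hp a) (Ne.symm h0)
  exact (this.trans_le h1).ne'

/-- the set of achievable single-letter values -/
def valSet {S X : Type*} [Fintype S] [Fintype X] (PS : S → ℝ) (PXgS : S → X → ℝ) : Set ℝ :=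
  { r : ℝ | ∃ (nU : ℕ) (PU : S → Fin nU → ℝ) (W : Fin nU → S → X → ℝ),
        (∀ s u, 0 ≤ PU s u) ∧ (∀ s, ∑ u, PU s u = 1) ∧
        (∀ u s x, 0 ≤ W u s x) ∧ (∀ u s, ∑ x, W u s x = 1) ∧
        (∀ s, 0 < PS s → ∀ x, ∑ u, PU s u * W u s x = PXgS s x) ∧
        r = mi (fun z : S × Fin nU × X => PS z.1 * PU z.1 z.2.1 * W z.2.1 z.1 z.2.2)
              (fun z => z.2.1) (fun z => z.2.2)
          - mi (fun z : S × Fin nU × X => PS z.1 * PU z.1 z.2.1 * W z.2.1 z.1 z.2.2)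
              (fun z => z.2.1) (fun z => z.1) }

lemma pushf_triple_sum {α β γ δ : Type*} [Fintype α] [Fintype β] [Fintype γ] [Fintype δ]
    (p : α → ℝ) (f : α → β) (g : α → γ) (h : α → δ) (b : β) (d : δ) :
    ∑ c, pushf p (fun a => (f a, g a, h a)) (b, c, d) = pushf p (fun a => (h a, f a)) (d, b) := by
  unfold pushf
  rw [Finset.sum_comm]
  refine Finset.sum_congr rfl fun a _ => ?_
  by_cases h1 : f a = b <;> by_cases h2 : h a = d <;> simp [h1, h2]

lemma single_letter {S X : Type*} [Fintype S] [Fintype X] (PS : S → ℝ) (PXgS : S → X → ℝ)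
    (hPX1 : ∀ s, ∑ x, PXgS s x = 1)
    {Ω υ : Type*} [Fintype Ω] [Fintype υ] (p : Ω → ℝ) (hp0 : ∀ a, 0 ≤ p a) (hp1 : ∑ a, p a = 1)
    (hPS0 : ∀ s, 0 ≤ PS s)
    (U : Ω → υ) (x : Ω → X) (s : Ω → S)
    (hxs : ∀ a b, pushf p (fun ω => (x ω, s ω)) (a, b) = PXgS b a * PS b) :
    mi p U x - mi p U s ∈ valSet PS PXgS := by
  have hne : Nonempty Ω := by
    by_contra h
    rw [not_nonempty_iff] at h
    simp at hp1
  obtain ⟨ω0⟩ := hne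
  have : Nonempty X := ⟨x ω0⟩
  have hU : 0 < Fintype.card υ := Fintype.card_pos_iff.mpr ⟨U ω0⟩
  have hX : 0 < Fintype.card X := Fintype.card_pos_iff.mpr ⟨x ω0⟩
  let e := Fintype.equivFin υ
  set nU := Fintype.card υ with hnU
  set J : S × Fin nU × X → ℝ := pushf p (fun ω => (s ω, e (U ω), x ω)) with hJ
  have hJ0 : ∀ z, 0 ≤ J z := pushf_nonneg p hp0 _
  have hJu : ∀ b a, ∑ u, J (b, u, a) = PXgS b a * PS b := by
    intro b a
    rw [← hxs, hJ, pushf_triple_sum]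
  set B : S → Fin nU → ℝ := fun b u => ∑ a, J (b, u, a) with hB
  have hB0 : ∀ b u, 0 ≤ B b u := fun b u => Finset.sum_nonneg fun a _ => hJ0 _
  have hBs : ∀ b, ∑ u, B b u = PS b := by
    intro b
    simp only [hB]
    rw [Finset.sum_comm, Finset.sum_congr rfl fun a _ => hJu b a, ← Finset.sum_mul, hPX1, one_mul]
  have hB_J : ∀ b u a, B b u = 0 → J (b, u, a) = 0 := fun b u a h =>
    (Finset.sum_eq_zero_iff_of_nonneg fun a _ => hJ0 _).mp h a (Finset.mem_univ a)
  have hPS_B : ∀ b u, PS b = 0 → B b u = 0 := fun b u h =>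
    (Finset.sum_eq_zero_iff_of_nonneg fun u _ => hB0 b u).mp ((hBs b).trans h) u (Finset.mem_univ u)
  set PU : S → Fin nU → ℝ := fun b u => if PS b = 0 then 1 / (nU : ℝ) else B b u / PS b with hPU
  set W : Fin nU → S → X → ℝ := fun u b a =>
    if B b u = 0 then 1 / (Fintype.card X : ℝ) else J (b, u, a) / B b u with hW
  have hprod : ∀ b u a, PS b * PU b u * W u b a = J (b, u, a) := by
    intro b u a
    simp only [hPU, hW]
    by_cases h1 : PS b = 0
    · rw [h1, hB_J b u a (hPS_B b u h1)]; simp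
    · rw [if_neg h1, mul_div_cancel₀ _ h1]
      by_cases h2 : B b u = 0
      · rw [h2, hB_J b u a h2]; simp
      · rw [if_neg h2, mul_div_cancel₀ _ h2]
  have hfun : (fun z : S × Fin nU × X => PS z.1 * PU z.1 z.2.1 * W z.2.1 z.1 z.2.2) = J := by
    funext z; exact hprod z.1 z.2.1 z.2.2
  refine ⟨nU, PU, W, ?_, ?_, ?_, ?_, ?_, ?_⟩
  · intro b u
    simp only [hPU]
    split_ifs
    · positivity
    · exact div_nonneg (hB0 b u) (hPS0 b)
  · intro b
    simp only [hPU]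
    by_cases h : PS b = 0
    · simp only [h, if_true]
      simp
      field_simp
    · simp only [h, if_false]
      rw [← Finset.sum_div, hBs, div_self h]
  · intro u b a
    simp only [hW]
    split_ifs
    · positivity
    · exact div_nonneg (hJ0 _) (hB0 b u)
  · intro u b
    simp only [hW]
    by_cases h : B b u = 0
    · simp only [h, if_true]
      simp
    · simp only [h, if_false]
      rw [← Finset.sum_div]
      exact div_self h
  · intro b hb a
    have h : PS b * ∑ u, PU b u * W u b a = PS b * PXgS b a := by
      rw [Finset.mul_sum, mul_comm _ (PXgS b a), ← hJu]
      refine Finset.sum_congr rfl fun u _ => ?_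
      rw [← hprod]; ring
    exact mul_left_cancel₀ hb.ne' h
  · rw [hfun]
    unfold mi
    simp only [hJ, entRV_pushf]
    rw [entRV_congr p (fun a => e (U a)) U (by simp),
      entRV_congr p (fun a => (e (U a), x a)) (fun a => (U a, x a)) (by simp),
      entRV_congr p (fun a => (e (U a), s a)) (fun a => (U a, s a)) (by simp)]

lemma mi_diff_le {Ω υ S X : Type*} [Fintype Ω] [Fintype υ] [Fintype S] [Fintype X]
    (p : Ω → ℝ) (hp0 : ∀ a, 0 ≤ p a) (hp1 : ∑ a, p a = 1) (U : Ω → υ) (x : Ω → X) (s : Ω → S) :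
    mi p U x - mi p U s ≤ Real.logb 2 (Fintype.card X) + Real.logb 2 (Fintype.card S) := by
  have hne : Nonempty Ω := by
    by_contra h
    rw [not_nonempty_iff] at h
    simp at hp1
  obtain ⟨ω0⟩ := hne
  have hX : (0 : ℝ) < Fintype.card X := by exact_mod_cast Fintype.card_pos_iff.mpr ⟨x ω0⟩
  have hS : (0 : ℝ) < Fintype.card S := by exact_mod_cast Fintype.card_pos_iff.mpr ⟨s ω0⟩
  have h1 : entRV p x ≤ Real.logb 2 (Fintype.card X) := by
    refine (gibbsRV p x (fun _ => 1 / (Fintype.card X : ℝ)) hp0 (fun _ => by positivity)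
      (fun _ _ => by positivity) ?_).trans ?_
    · rw [hp1]; simp; field_simp; rfl
    · rw [← Finset.sum_mul, hp1]; simp
  have h2 : entRV p (fun a => (U a, s a)) ≤ entRV p U + Real.logb 2 (Fintype.card S) := by
    refine (gibbsRV p (fun a => (U a, s a)) (fun z => pushf p U z.1 * (1 / (Fintype.card S : ℝ))) hp0
      (fun z => mul_nonneg (pushf_nonneg p hp0 _ _) (by positivity))
      ?_ ?_).trans ?_
    · intro a ha
      have := lt_of_le_of_ne (hp0 a) (Ne.symm ha)
      have := this.trans_le (le_pushf p hp0 U a)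
      positivity
    · rw [Fintype.sum_prod_type, ← pushf_sum p U]
      refine Finset.sum_le_sum fun u _ => ?_
      simp; field_simp; rfl
    · rw [entRV_eq_sum p U, neg_add_eq_sub, ← sub_nonneg]
      have : ∑ a, p a * Real.logb 2 (pushf p U (U a) * (1 / (Fintype.card S : ℝ)))
          = ∑ a, (p a * Real.logb 2 (pushf p U (U a)) - p a * Real.logb 2 (Fintype.card S)) := by
        refine Finset.sum_congr rfl fun a _ => ?_
        by_cases ha : p a = 0
        · simp [ha]
        have h3 := lt_of_le_of_ne (hp0 a) (Ne.symm ha)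
        have h4 := h3.trans_le (le_pushf p hp0 U a)
        rw [Real.logb_mul h4.ne' (by positivity), one_div, Real.logb_inv]
        ring
      dsimp only
      rw [this, Finset.sum_sub_distrib, ← Finset.sum_mul, hp1]
      linarith
  have h3 : entRV p U ≤ entRV p (fun a => (U a, x a)) :=
    entRV_mono p hp0 _ _ (fun a b h => (Prod.mk.inj h).1)
  have h4 := entRV_nonneg p hp0 hp1 s
  unfold mi
  linarith

lemma valSet_bdd {S X : Type*} [Fintype S] [Fintype X] (PS : S → ℝ) (PXgS : S → X → ℝ)
    (hPS0 : ∀ s, 0 ≤ PS s) (hPS1 : ∑ s, PS s = 1) : BddAbove (valSet PS PXgS) := by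
  refine ⟨Real.logb 2 (Fintype.card X) + Real.logb 2 (Fintype.card S), ?_⟩
  rintro r ⟨nU, PU, W, h1, h2, h3, h4, h5, rfl⟩
  apply mi_diff_le
  · intro z
    exact mul_nonneg (mul_nonneg (hPS0 _) (h1 _ _)) (h3 _ _ _)
  · rw [Fintype.sum_prod_type]
    simp_rw [Fintype.sum_prod_type, ← Finset.mul_sum, h4, mul_one, ← Finset.mul_sum, h2, mul_one]
    exact hPS1

lemma code_bound {S X : Type*} [Fintype S] [Fintype X]
    (PS : S → ℝ) (PXgS : S → X → ℝ)
    (hPS0 : ∀ s, 0 ≤ PS s) (hPS1 : ∑ s, PS s = 1)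
    (hPX0 : ∀ s x, 0 ≤ PXgS s x) (hPX1 : ∀ s, ∑ x, PXgS s x = 1)
    (n M K : ℕ) (hM : 0 < M) (hK : 0 < K)
    (enc : (Fin n → S) → Fin M → Fin K → (Fin n → X) → ℝ)
    (g : (Fin n → X) → Fin K → Fin M)
    (henc0 : ∀ sn m k xn, 0 ≤ enc sn m k xn)
    (henc1 : ∀ sn m k, ∑ xn, enc sn m k xn = 1)
    (havg : ∀ sn m xn, (1 / (K : ℝ)) * ∑ k, enc sn m k xn = ∏ t, PXgS (sn t) (xn t))
    (C : ℝ) (hC : ∀ r ∈ valSet PS PXgS, r ≤ C) :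
    (1 - ∑ z : (Fin n → S) × Fin M × Fin K × (Fin n → X),
          if g z.2.2.2 z.2.2.1 ≠ z.2.1 then
            (∏ t, PS (z.1 t)) * (1 / (M : ℝ)) * (1 / (K : ℝ))
              * enc z.1 z.2.1 z.2.2.1 z.2.2.2
          else 0) * Real.logb 2 M ≤ n * C + 1 := by
  have hMr : (0 : ℝ) < M := by exact_mod_cast hM
  have hKr : (0 : ℝ) < K := by exact_mod_cast hK
  set p : (Fin n → S) × Fin M × Fin K × (Fin n → X) → ℝ := fun z =>
    (∏ t, PS (z.1 t)) * (1 / (M : ℝ)) * (1 / (K : ℝ)) * enc z.1 z.2.1 z.2.2.1 z.2.2.2 with hp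
  have hp0 : ∀ z, 0 ≤ p z := by
    intro z
    have h1 : 0 ≤ ∏ t, PS (z.1 t) := Finset.prod_nonneg fun t _ => hPS0 _
    have := henc0 z.1 z.2.1 z.2.2.1 z.2.2.2
    simp only [hp]
    positivity
  -- the product law of (X^n, S^n)
  set Q : X × S → ℝ := fun a => PXgS a.2 a.1 * PS a.2 with hQ
  have hQ1 : ∑ a, Q a = 1 := by
    rw [Fintype.sum_prod_type_right]
    simp only [hQ]
    simp_rw [← Finset.sum_mul, hPX1, one_mul, hPS1]
  have hlaw : pushf p (fun z t => (z.2.2.2 t, z.1 t)) = fun v => ∏ t, Q (v t) := by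
    funext v
    have h1 : pushf p (fun z t => (z.2.2.2 t, z.1 t)) v
        = ∑ z, if z.1 = (fun t => (v t).2) then
            (if z.2.2.2 = (fun t => (v t).1) then p z else 0) else 0 := by
      unfold pushf
      refine Finset.sum_congr rfl fun z _ => ?_
      by_cases hv : (fun t => (z.2.2.2 t, z.1 t)) = v
      · rw [if_pos hv, if_pos (by rw [← hv]), if_pos (by rw [← hv])]
      · rw [if_neg hv]
        by_cases ha : z.1 = (fun t => (v t).2)
        · rw [if_pos ha, if_neg]
          intro hb
          apply hv
          rw [ha, hb]
        · rw [if_neg ha]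
    rw [h1]
    simp_rw [Fintype.sum_prod_type]
    rw [Finset.sum_eq_single (fun t => (v t).2) (by intro b _ hb; simp [hb]) (by simp)]
    simp only [if_true]
    have h2 : ∀ m k, (∑ y : Fin n → X, if y = (fun t => (v t).1) then
        p ((fun t => (v t).2), m, k, y) else 0) = p ((fun t => (v t).2), m, k, fun t => (v t).1) := by
      intro m k; simp
    simp_rw [h2]
    simp only [hp, hQ]
    simp_rw [mul_assoc, ← Finset.mul_sum]
    rw [Finset.mul_sum _ _ (1 / (K : ℝ)), Finset.sum_congr rfl fun m _ => havg _ m _]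
    rw [Finset.prod_mul_distrib]
    simp
    field_simp
  have hp1 : ∑ z, p z = 1 := by
    rw [← pushf_sum p (fun z t => (z.2.2.2 t, z.1 t)), hlaw]
    rw [sum_prod_pi (fun _ => Q)]
    simp [hQ1]
  -- marginals
  have hXS : ∀ t b, pushf p (fun z => (z.2.2.2 t, z.1 t)) b = Q b := by
    intro t b
    rw [← pushf_iid_coord Q hQ1 t b, ← hlaw, pushf_pushf]
  have hXt : ∀ t b, pushf p (fun z => z.2.2.2 t) b = pushf Q Prod.fst b := by
    intro t b
    rw [← funext (hXS t), pushf_pushf]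
  have hSt : ∀ t b, pushf p (fun z => z.1 t) b = PS b := by
    intro t b
    have : pushf Q Prod.snd b = PS b := by
      unfold pushf
      rw [Fintype.sum_prod_type_right]
      simp only [hQ]
      rw [Finset.sum_eq_single b (by intro c _ hc; simp [hc]) (by simp)]
      simp [← Finset.sum_mul, hPX1]
    rw [← this, ← funext (hXS t), pushf_pushf]
  have hXn : ∀ y, pushf p (fun z => z.2.2.2) y = ∏ t, pushf Q Prod.fst (y t) := by
    intro y
    rw [← pushf_iid_map Q Prod.fst y, ← hlaw, pushf_pushf]
  set L := Real.logb 2 (M : ℝ) with hL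
  set LK := Real.logb 2 (K : ℝ) with hLK
  have hL0 : 0 ≤ L := Real.logb_nonneg (by norm_num) (by exact_mod_cast hM)
  set HX : ℝ := ∑ t : Fin n, entRV p (fun z => z.2.2.2 t) with hHX
  set HS : ℝ := ∑ t : Fin n, entRV p (fun z => z.1 t) with hHS
  set err : ℝ := ∑ z, (if g z.2.2.2 z.2.2.1 ≠ z.2.1 then p z else 0) with herr
  -- telescoping quantities
  let G : ℕ → ℝ := fun i => entRV p (fun z => ((z.2.1, z.2.2.1),
    (fun j : Fin n => if (j : ℕ) < i then some (z.2.2.2 j) else none),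
    (fun j : Fin n => if i ≤ (j : ℕ) then some (z.1 j) else none)))
  have hG0 : G 0 = L + LK + HS := by
    have e1 : G 0 = entRV p (fun z => (z.1, z.2.1, z.2.2.1)) := by
      apply entRV_congr
      intro a b
      simp only [not_lt_zero, if_false, Nat.zero_le, if_true, Prod.mk.injEq, funext_iff,
        Option.some.injEq]
      tauto
    rw [e1, entRV_eq_sum]
    have e2 : ∀ z : (Fin n → S) × Fin M × Fin K × (Fin n → X),
        pushf p (fun z => (z.1, z.2.1, z.2.2.1)) (z.1, z.2.1, z.2.2.1)
          = (∏ t, PS (z.1 t)) * (1 / (M : ℝ)) * (1 / (K : ℝ)) := by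
      rintro ⟨s, m, k, x⟩
      unfold pushf
      simp_rw [Fintype.sum_prod_type]
      rw [Finset.sum_eq_single s (by intro b _ hb; simp [hb]) (by simp),
        Finset.sum_eq_single m (by intro b _ hb; simp [hb]) (by simp),
        Finset.sum_eq_single k (by intro b _ hb; simp [hb]) (by simp)]
      simp only [if_true, hp]
      rw [← Finset.mul_sum, henc1, mul_one]
    have e3 : ∀ z, p z * Real.logb 2 (pushf p (fun z => (z.1, z.2.1, z.2.2.1)) (z.1, z.2.1, z.2.2.1))
        = p z * Real.logb 2 (∏ t, PS (z.1 t)) - p z * (L + LK) := by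
      intro z
      rw [e2]
      by_cases h0 : p z = 0
      · simp [h0]
      have h1 : ∏ t, PS (z.1 t) ≠ 0 := by
        intro h; apply h0; simp only [hp]; rw [h]; simp
      rw [Real.logb_mul (by positivity) (by positivity), Real.logb_mul h1 (by positivity),
        one_div, one_div, Real.logb_inv, Real.logb_inv]
      ring
    rw [Finset.sum_congr rfl fun z _ => e3 z, Finset.sum_sub_distrib, ← Finset.sum_mul, hp1, hHS,
      ← sum_logb_prod p PS hp0 (fun z => z.1) hSt]
    ring
  have hGn : G n ≤ HX + LK + 1 + err * L := by
    have e1 : G n = entRV p (fun z => (z.2.1, z.2.2.1, z.2.2.2)) := by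
      apply entRV_congr
      intro a b
      have hlt : ∀ j : Fin n, ¬ (n ≤ (j : ℕ)) := fun j => not_le.mpr j.2
      simp only [Fin.is_lt, if_true, hlt, if_false, Prod.mk.injEq, funext_iff,
        Option.some.injEq]
      tauto
    rw [e1]
    have hPXn0 : ∀ y, 0 ≤ pushf p (fun z => z.2.2.2) y := pushf_nonneg p hp0 _
    have hpos : ∀ z, p z ≠ 0 → 0 < pushf p (fun z => z.2.2.2) z.2.2.2 := by
      intro z hz
      exact (lt_of_le_of_ne (hp0 z) (Ne.symm hz)).trans_le (le_pushf p hp0 (fun z => z.2.2.2) z)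
    let q : Fin M × Fin K × (Fin n → X) → ℝ := fun w =>
      pushf p (fun z => z.2.2.2) w.2.2 * (1 / (K : ℝ)) *
        ((if g w.2.2 w.2.1 = w.1 then 1 / 2 else 0) + 1 / 2 * (1 / (M : ℝ)))
    have hq0 : ∀ w, 0 ≤ q w := by
      intro w
      have := hPXn0 w.2.2
      simp only [q]
      split_ifs <;> positivity
    refine (gibbsRV p (fun z => (z.2.1, z.2.2.1, z.2.2.2)) q hp0 hq0 ?_ ?_).trans ?_
    · intro z hz
      have := hpos z hz
      simp only [q]
      split_ifs <;> positivity
    · apply le_of_eq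
      rw [← pushf_sum p (fun z => z.2.2.2)]
      rw [Fintype.sum_prod_type, Finset.sum_comm]
      rw [Fintype.sum_prod_type, Finset.sum_comm]
      refine Finset.sum_congr rfl fun y _ => ?_
      simp only [q]
      simp_rw [← Finset.mul_sum, Finset.sum_add_distrib]
      simp
      field_simp
      norm_num
    · have e2 : ∀ z, -(p z * Real.logb 2 (q (z.2.1, z.2.2.1, z.2.2.2)))
          ≤ -(p z * Real.logb 2 (∏ t, pushf Q Prod.fst (z.2.2.2 t))) + p z * (LK + 1)
            + (if g z.2.2.2 z.2.2.1 ≠ z.2.1 then p z else 0) * L := by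
        intro z
        by_cases h0 : p z = 0
        · simp [h0]
        have h1 := hpos z h0
        have hpz := lt_of_le_of_ne (hp0 z) (Ne.symm h0)
        rw [← hXn]
        simp only [q]
        by_cases hg : g z.2.2.2 z.2.2.1 = z.2.1
        · rw [if_pos hg, if_neg (not_not.mpr hg)]
          rw [Real.logb_mul (by positivity) (by positivity), Real.logb_mul h1.ne' (by positivity),
            one_div (K : ℝ), Real.logb_inv]
          have : -1 ≤ Real.logb 2 (1 / 2 + 1 / 2 * (1 / (M : ℝ))) := by
            have h2 : Real.logb 2 (1 / 2 : ℝ) = -1 := by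
              rw [one_div, Real.logb_inv, Real.logb_self_eq_one (by norm_num)]
            rw [← h2]
            refine Real.logb_le_logb_of_le (by norm_num) (by norm_num) ?_
            have : 0 < 1 / 2 * (1 / (M : ℝ)) := by positivity
            linarith
          nlinarith
        · rw [if_neg hg, if_pos hg]
          rw [zero_add, Real.logb_mul (by positivity) (by positivity),
            Real.logb_mul h1.ne' (by positivity), Real.logb_mul (by positivity) (by positivity),
            one_div (K : ℝ), Real.logb_inv, one_div (M : ℝ), Real.logb_inv, one_div, Real.logb_inv,
            Real.logb_self_eq_one (by norm_num)]
          apply le_of_eq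
          ring
      rw [← Finset.sum_neg_distrib]
      refine (Finset.sum_le_sum fun z _ => e2 z).trans (le_of_eq ?_)
      rw [Finset.sum_add_distrib, Finset.sum_add_distrib, ← Finset.sum_mul, ← Finset.sum_mul, hp1,
        ← herr, Finset.sum_neg_distrib,
        sum_logb_prod p (pushf Q Prod.fst) hp0 (fun z => z.2.2.2) hXt]
      ring
  -- single-letter terms
  have hterm : ∀ i : Fin n, entRV p (fun z => z.2.2.2 i) - entRV p (fun z => z.1 i)
      + (G i - G (i + 1)) ≤ C := by
    intro i
    let U : (Fin n → S) × Fin M × Fin K × (Fin n → X) →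
        (Fin M × Fin K) × (Fin n → Option X) × (Fin n → Option S) := fun z =>
      ((z.2.1, z.2.2.1), (fun j : Fin n => if (j : ℕ) < i then some (z.2.2.2 j) else none),
        (fun j : Fin n => if (i : ℕ) + 1 ≤ (j : ℕ) then some (z.1 j) else none))
    have h1 := hC _ (single_letter PS PXgS hPX1 p hp0 hp1 hPS0 U (fun z => z.2.2.2 i)
      (fun z => z.1 i) (fun a b => hXS i (a, b)))
    have h2 : entRV p (fun z => (U z, z.2.2.2 i)) = G (i + 1) := by
      apply entRV_congr
      intro a b
      simp only [U, Prod.mk.injEq, funext_iff]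
      constructor
      · rintro ⟨⟨h1, h2, h3⟩, h4⟩
        refine ⟨h1, fun j => ?_, h3⟩
        by_cases hj : (j : ℕ) < i
        · have := h2 j
          rw [if_pos hj, if_pos hj] at this
          rw [if_pos (by omega), if_pos (by omega)]; exact this
        · by_cases hj2 : j = i
          · subst hj2; simp [h4]
          · have : ¬ ((j : ℕ) < i + 1) := by
              intro h; exact hj2 (Fin.ext (by omega))
            rw [if_neg this, if_neg this]
      · rintro ⟨h1, h2, h3⟩
        refine ⟨⟨h1, fun j => ?_, h3⟩, ?_⟩
        · by_cases hj : (j : ℕ) < i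
          · have := h2 j
            rw [if_pos (by omega), if_pos (by omega)] at this
            rw [if_pos hj, if_pos hj]; exact this
          · rw [if_neg hj, if_neg hj]
        · have := h2 i
          simpa using this
    have h3 : entRV p (fun z => (U z, z.1 i)) = G i := by
      apply entRV_congr
      intro a b
      simp only [U, Prod.mk.injEq, funext_iff]
      constructor
      · rintro ⟨⟨h1, h2, h3⟩, h4⟩
        refine ⟨h1, h2, fun j => ?_⟩
        by_cases hj : (i : ℕ) + 1 ≤ j
        · have := h3 j
          rw [if_pos hj, if_pos hj] at this
          rw [if_pos (by omega), if_pos (by omega)]; exact this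
        · by_cases hj2 : j = i
          · subst hj2; simp [h4]
          · have : ¬ ((i : ℕ) ≤ j) := by
              intro h; exact hj2 (Fin.ext (by omega))
            rw [if_neg this, if_neg this]
      · rintro ⟨h1, h2, h3⟩
        refine ⟨⟨h1, h2, fun j => ?_⟩, ?_⟩
        · by_cases hj : (i : ℕ) + 1 ≤ j
          · have := h3 j
            rw [if_pos (by omega), if_pos (by omega)] at this
            rw [if_pos hj, if_pos hj]; exact this
          · rw [if_neg hj, if_neg hj]
        · have := h3 i
          simpa using this
    unfold mi at h1
    rw [h2, h3] at h1
    linarith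
  have hsum : ∑ i : Fin n, (entRV p (fun z => z.2.2.2 i) - entRV p (fun z => z.1 i)
      + (G i - G (i + 1))) ≤ n * C := by
    refine (Finset.sum_le_sum fun i _ => hterm i).trans (le_of_eq ?_)
    simp
  rw [Finset.sum_add_distrib, Finset.sum_sub_distrib, ← hHX, ← hHS,
    Fin.sum_univ_eq_sum_range (fun i => G i - G (i + 1)) n, Finset.sum_range_sub'] at hsum
  nlinarith

lemma valSet_zero {S X : Type*} [Fintype S] [Fintype X] (PS : S → ℝ) (PXgS : S → X → ℝ)
    (hPS0 : ∀ s, 0 ≤ PS s) (hPS1 : ∑ s, PS s = 1)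
    (hPX0 : ∀ s x, 0 ≤ PXgS s x) (hPX1 : ∀ s, ∑ x, PXgS s x = 1) :
    (0 : ℝ) ∈ valSet PS PXgS := by
  have hp0 : ∀ a : X × S, 0 ≤ PXgS a.2 a.1 * PS a.2 := fun a => mul_nonneg (hPX0 _ _) (hPS0 _)
  have hp1 : ∑ a : X × S, PXgS a.2 a.1 * PS a.2 = 1 := by
    rw [Fintype.sum_prod_type_right]
    simp_rw [← Finset.sum_mul, hPX1, one_mul, hPS1]
  have h := single_letter PS PXgS hPX1 (fun a : X × S => PXgS a.2 a.1 * PS a.2) hp0 hp1 hPS0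
    (fun _ => ()) Prod.fst Prod.snd (by intro a b; simp [pushf])
  convert h using 1
  unfold mi
  rw [entRV_congr _ (fun a : X × S => ((), a.1)) Prod.fst (by simp),
    entRV_congr _ (fun a : X × S => ((), a.2)) Prod.snd (by simp)]
  ring

lemma code_bound' {S X : Type*} [Fintype S] [Fintype X]
    (PS : S → ℝ) (PXgS : S → X → ℝ)
    (hPS0 : ∀ s, 0 ≤ PS s) (hPS1 : ∑ s, PS s = 1)
    (hPX0 : ∀ s x, 0 ≤ PXgS s x) (hPX1 : ∀ s, ∑ x, PXgS s x = 1)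
    (n M K : ℕ) (hM : 0 < M) (hK : 0 < K)
    (enc : (Fin n → S) → Fin M → Fin K → (Fin n → X) → ℝ)
    (g : (Fin n → X) → Fin K → Fin M)
    (henc0 : ∀ sn m k xn, 0 ≤ enc sn m k xn)
    (henc1 : ∀ sn m k, ∑ xn, enc sn m k xn = 1)
    (C : ℝ) (hC : ∀ r ∈ valSet PS PXgS, r ≤ C) :
    (1 - ((∑ z : (Fin n → S) × Fin M × Fin K × (Fin n → X),
          if g z.2.2.2 z.2.2.1 ≠ z.2.1 then
            (∏ t, PS (z.1 t)) * (1 / (M : ℝ)) * (1 / (K : ℝ))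
              * enc z.1 z.2.1 z.2.2.1 z.2.2.2
          else 0) + ⨆ m : Fin M,
        TV (fun xs : (Fin n → X) × (Fin n → S) =>
              (∏ t, PS (xs.2 t)) * (1 / (K : ℝ)) * ∑ k, enc xs.2 m k xs.1)
           (fun xs : (Fin n → X) × (Fin n → S) =>
              ∏ t, PXgS (xs.2 t) (xs.1 t) * PS (xs.2 t)))) * Real.logb 2 M ≤ n * C + 1 := by
  have hMr : (0 : ℝ) < M := by exact_mod_cast hM
  have hKr : (0 : ℝ) < K := by exact_mod_cast hK
  have hc : ∀ (sn : Fin n → S) (m : Fin M), _ := fun sn m =>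
    coupling hK (enc sn m) (fun xn => ∏ t, PXgS (sn t) (xn t)) (henc0 sn m) (henc1 sn m)
      (fun xn => Finset.prod_nonneg fun t _ => hPX0 _ _)
      ((sum_prod_pi (fun t x => PXgS (sn t) x)).trans (by simp [hPX1]))
  choose enc' e h0 h1 h2 h3 h4 h5 using hc
  have hb := code_bound PS PXgS hPS0 hPS1 hPX0 hPX1 n M K hM hK enc' g h0 h1 h2 C hC
  refine le_trans (mul_le_mul_of_nonneg_right ?_
    (Real.logb_nonneg (by norm_num) (by exact_mod_cast hM))) hb
  have hPn : ∀ s : Fin n → S, 0 ≤ ∏ t, PS (s t) := fun s => Finset.prod_nonneg fun t _ => hPS0 _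
  set tv : Fin M → ℝ := fun m => TV (fun xs : (Fin n → X) × (Fin n → S) =>
              (∏ t, PS (xs.2 t)) * (1 / (K : ℝ)) * ∑ k, enc xs.2 m k xs.1)
           (fun xs : (Fin n → X) × (Fin n → S) =>
              ∏ t, PXgS (xs.2 t) (xs.1 t) * PS (xs.2 t)) with htv
  have htv' : ∀ m, tv m = ∑ s : Fin n → S, (∏ t, PS (s t)) *
      ((1 / (K : ℝ)) * ∑ k, ∑ x, e s m k x) := by
    intro m
    simp only [htv, TV]
    rw [Fintype.sum_prod_type_right, Finset.sum_div]
    refine Finset.sum_congr rfl fun s _ => ?_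
    rw [h5, ← mul_div_assoc, Finset.mul_sum]
    congr 1
    refine Finset.sum_congr rfl fun x _ => ?_
    dsimp only
    rw [Finset.prod_mul_distrib, mul_comm (∏ t, PXgS (s t) (x t)), mul_assoc, ← mul_sub, abs_mul,
      abs_of_nonneg (hPn s)]
  have hsup : ∀ m, tv m ≤ ⨆ m, tv m := fun m => le_ciSup (Set.finite_range tv).bddAbove m
  have hE : ∑ z : (Fin n → S) × Fin M × Fin K × (Fin n → X),
      (∏ t, PS (z.1 t)) * (1 / (M : ℝ)) * (1 / (K : ℝ)) * e z.1 z.2.1 z.2.2.1 z.2.2.2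
      = (1 / (M : ℝ)) * ∑ m, tv m := by
    simp_rw [htv', Fintype.sum_prod_type]
    rw [Finset.sum_comm, Finset.mul_sum]
    refine Finset.sum_congr rfl fun m _ => ?_
    rw [Finset.mul_sum]
    refine Finset.sum_congr rfl fun s _ => ?_
    simp_rw [← Finset.mul_sum]
    ring
  have hE2 : (1 / (M : ℝ)) * ∑ m, tv m ≤ ⨆ m, tv m := by
    have : ∑ m, tv m ≤ ∑ _m : Fin M, ⨆ m, tv m := Finset.sum_le_sum fun m _ => hsup m
    simp only [Finset.sum_const, Finset.card_univ, Fintype.card_fin, nsmul_eq_mul] at this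
    calc _ ≤ (1 / (M : ℝ)) * (M * ⨆ m, tv m) := by gcongr
      _ = _ := by field_simp
  have hD : (∑ z : (Fin n → S) × Fin M × Fin K × (Fin n → X),
          if g z.2.2.2 z.2.2.1 ≠ z.2.1 then
            (∏ t, PS (z.1 t)) * (1 / (M : ℝ)) * (1 / (K : ℝ))
              * enc' z.1 z.2.1 z.2.2.1 z.2.2.2
          else 0) ≤ (∑ z : (Fin n → S) × Fin M × Fin K × (Fin n → X),
          if g z.2.2.2 z.2.2.1 ≠ z.2.1 then
            (∏ t, PS (z.1 t)) * (1 / (M : ℝ)) * (1 / (K : ℝ))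
              * enc z.1 z.2.1 z.2.2.1 z.2.2.2
          else 0) + ∑ z : (Fin n → S) × Fin M × Fin K × (Fin n → X),
      (∏ t, PS (z.1 t)) * (1 / (M : ℝ)) * (1 / (K : ℝ)) * e z.1 z.2.1 z.2.2.1 z.2.2.2 := by
    rw [← Finset.sum_add_distrib]
    refine Finset.sum_le_sum fun z _ => ?_
    have hz : 0 ≤ (∏ t, PS (z.1 t)) * (1 / (M : ℝ)) * (1 / (K : ℝ)) := by
      have := hPn z.1
      positivity
    split_ifs
    · rw [← mul_add]
      exact mul_le_mul_of_nonneg_left (h4 _ _ _ _) hz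
    · rw [zero_add]
      exact mul_nonneg hz (h3 _ _ _ _)
  linarith

end CWC

/-- **Converse part of Theorem 1** (covert multi-bit watermarking capacity with
non-causal state).  For any sequence of codes (arbitrary stochastic encoders and
decoders with uniform independent messages and keys) whose error probability and
covertness deviation (maximal total variation to the base product law over the
messages) both vanish, the message rate `limsup (1/n) log₂ |M_n|` is bounded by
`sup { I(U;X) − I(U;S) }` over all finite auxiliary alphabets `U` and conditional
pmfs `P_{U|S}`, `W_{X|U,S}` consistent with the base token law `P_{X|S}`. -/
theorem covert_watermarking_converse
    {S X : Type*} [Fintype S] [Fintype X]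
    (PS : S → ℝ) (PXgS : S → X → ℝ)
    (hPS0 : ∀ s, 0 ≤ PS s) (hPS1 : ∑ s, PS s = 1)
    (hPX0 : ∀ s x, 0 ≤ PXgS s x) (hPX1 : ∀ s, ∑ x, PXgS s x = 1)
    (Mn Kn : ℕ → ℕ) (hM : ∀ n, 0 < Mn n) (hK : ∀ n, 0 < Kn n)
    (enc : ∀ n : ℕ, (Fin n → S) → Fin (Mn n) → Fin (Kn n) → (Fin n → X) → ℝ)
    (g : ∀ n : ℕ, (Fin n → X) → Fin (Kn n) → Fin (Mn n))
    (henc0 : ∀ n sn m k xn, 0 ≤ enc n sn m k xn)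
    (henc1 : ∀ n sn m k, ∑ xn, enc n sn m k xn = 1)
    -- the error probabilities δₙ = P(g(Xⁿ,K) ≠ M) vanish
    (hδ : Tendsto (fun n =>
        ∑ z : (Fin n → S) × Fin (Mn n) × Fin (Kn n) × (Fin n → X),
          if g n z.2.2.2 z.2.2.1 ≠ z.2.1 then
            (∏ t, PS (z.1 t)) * (1 / (Mn n : ℝ)) * (1 / (Kn n : ℝ))
              * enc n z.1 z.2.1 z.2.2.1 z.2.2.2
          else 0) atTop (nhds 0))
    -- the covertness deviations σₙ = maxₘ V(P̃ᵐ_{XⁿSⁿ}, (P_{X|S} P_S)^{⊗n}) vanish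
    (hσ : Tendsto (fun n => ⨆ m : Fin (Mn n),
        TV (fun xs : (Fin n → X) × (Fin n → S) =>
              (∏ t, PS (xs.2 t)) * (1 / (Kn n : ℝ)) * ∑ k, enc n xs.2 m k xs.1)
           (fun xs : (Fin n → X) × (Fin n → S) =>
              ∏ t, PXgS (xs.2 t) (xs.1 t) * PS (xs.2 t))) atTop (nhds 0)) :
    limsup (fun n : ℕ => Real.logb 2 (Mn n : ℝ) / (n : ℝ)) atTop ≤
      sSup { r : ℝ | ∃ (nU : ℕ) (PU : S → Fin nU → ℝ) (W : Fin nU → S → X → ℝ),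
        (∀ s u, 0 ≤ PU s u) ∧ (∀ s, ∑ u, PU s u = 1) ∧
        (∀ u s x, 0 ≤ W u s x) ∧ (∀ u s, ∑ x, W u s x = 1) ∧
        (∀ s, 0 < PS s → ∀ x, ∑ u, PU s u * W u s x = PXgS s x) ∧
        r = mi (fun z : S × Fin nU × X => PS z.1 * PU z.1 z.2.1 * W z.2.1 z.1 z.2.2)
              (fun z => z.2.1) (fun z => z.2.2)
          - mi (fun z : S × Fin nU × X => PS z.1 * PU z.1 z.2.1 * W z.2.1 z.1 z.2.2)
              (fun z => z.2.1) (fun z => z.1) } := by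
  change _ ≤ sSup (CWC.valSet PS PXgS)
  set C := sSup (CWC.valSet PS PXgS) with hCdef
  have hbdd := CWC.valSet_bdd PS PXgS hPS0 hPS1
  have hC : ∀ r ∈ CWC.valSet PS PXgS, r ≤ C := fun r hr => le_csSup hbdd hr
  have hkey := fun n => CWC.code_bound' PS PXgS hPS0 hPS1 hPX0 hPX1 n (Mn n) (Kn n) (hM n) (hK n)
    (enc n) (g n) (henc0 n) (henc1 n) C hC
  have hε := hδ.add hσ
  rw [add_zero] at hε
  obtain ⟨ε, hε, hkey⟩ : ∃ ε : ℕ → ℝ, Tendsto ε atTop (nhds 0) ∧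
      ∀ n, (1 - ε n) * Real.logb 2 (Mn n) ≤ n * C + 1 := ⟨_, hε, hkey⟩
  have hlim : Tendsto (fun n : ℕ => (C + 1 / (n : ℝ)) / (1 - ε n)) atTop (nhds C) := by
    have h1 : Tendsto (fun n : ℕ => C + 1 / (n : ℝ)) atTop (nhds (C + 0)) :=
      tendsto_const_nhds.add tendsto_one_div_atTop_nhds_zero_nat
    have h2 : Tendsto (fun n : ℕ => 1 - ε n) atTop (nhds (1 - 0)) :=
      tendsto_const_nhds.sub hε
    have h3 := h1.div h2 (by norm_num)
    rw [add_zero, sub_zero, div_one] at h3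
    exact h3
  have hev : ∀ᶠ n : ℕ in atTop, Real.logb 2 (Mn n : ℝ) / (n : ℝ) ≤ (C + 1 / (n : ℝ)) / (1 - ε n) := by
    filter_upwards [hε.eventually (gt_mem_nhds (show (0 : ℝ) < 1 by norm_num)),
      eventually_gt_atTop 0] with n hn hn0
    have hnr : (0 : ℝ) < n := by exact_mod_cast hn0
    have h1 : 0 < 1 - ε n := by linarith
    rw [le_div_iff₀ h1, div_mul_eq_mul_div, div_le_iff₀ hnr]
    have := hkey n
    have h2 : (C + 1 / (n : ℝ)) * n = n * C + 1 := by field_simp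
    rw [h2]
    linarith
  rw [← hlim.limsup_eq]
  refine limsup_le_limsup hev ?_ hlim.isBoundedUnder_le
  refine IsCoboundedUnder.of_frequently_ge (a := 0) (Frequently.of_forall fun n => ?_)
  exact div_nonneg (Real.logb_nonneg (by norm_num) (by exact_mod_cast hM n)) (Nat.cast_nonneg n)
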